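/- arXiv:1910.05922 — 2 statements merged into one kernel-verified Lean document; each statement's English description precedes it below -/
import Mathlib

section
/- Let r ≥ 1 be an odd integer, let d ≥ 1 be an integer, and set g = gcd(d, r). Then the set { n·r + 2·k·d : n ∈ ℤ, k ∈ ℤ, 1 ≤ k ≤ r/g − 1 } equals the set { x ∈ ℤ : g divides x and r does not divide x }. -/
/-! Modulo `r`, the multiples of `a` are the multiples of `g = gcd(a, r)`, and `k * a` depends only
on the residue of `k` modulo `r / g`; the residue `k ≡ 0` is the one with `k * a ≡ 0`. So letting
`k` run over the nonzero residues yields the multiples of `g` that are not multiples of `r`. For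
odd `r` take `a = 2 * d`, since the factor `2` does not change the gcd with `r`. -/

theorem mul_modEq_mul_iff_modEq_ediv_gcd {a r : ℤ} (hr : r ≠ 0) (k l : ℤ) :
    k * a ≡ l * a [ZMOD r] ↔ k ≡ l [ZMOD r / Int.gcd a r] := by
  have hg : 0 < Int.gcd a r := Int.gcd_pos_of_ne_zero_right a hr
  have hcop : IsCoprime (r / Int.gcd a r) (a / Int.gcd a r) :=
    (Int.isCoprime_iff_gcd_eq_one.mpr (Int.gcd_ediv_gcd_ediv_gcd hg)).symm
  calc k * a ≡ l * a [ZMOD r]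
      ↔ r ∣ (l - k) * a := by rw [Int.modEq_iff_dvd, sub_mul]
    _ ↔ r / Int.gcd a r ∣ (l - k) * (a / Int.gcd a r) := by
      rw [Int.ediv_dvd_iff_dvd_mul (Int.gcd_dvd_right a r) (by exact_mod_cast hg.ne'),
        mul_left_comm, Int.mul_ediv_cancel' (Int.gcd_dvd_left a r)]
    _ ↔ r / Int.gcd a r ∣ l - k :=
      ⟨hcop.dvd_of_dvd_mul_right, fun h ↦ h.mul_right _⟩
    _ ↔ k ≡ l [ZMOD r / Int.gcd a r] := Int.modEq_iff_dvd.symm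

theorem exists_mul_modEq_iff_gcd_dvd {a r x : ℤ} :
    (∃ k, k * a ≡ x [ZMOD r]) ↔ (Int.gcd a r : ℤ) ∣ x := by
  constructor
  · rintro ⟨k, hk⟩
    exact ((hk.of_dvd (Int.gcd_dvd_right a r)).dvd_iff).mp ((Int.gcd_dvd_left a r).mul_left k)
  · rintro ⟨y, rfl⟩
    refine ⟨y * Int.gcdA a r, Int.modEq_iff_dvd.mpr ⟨y * Int.gcdB a r, ?_⟩⟩
    linear_combination y * Int.gcd_eq_gcd_ab a r

theorem atypicality_set_odd_general (r a : ℤ) (hr : 0 < r) :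
    {x : ℤ | ∃ n k : ℤ, 1 ≤ k ∧ k ≤ r / (Int.gcd a r : ℤ) - 1 ∧ x = n * r + k * a} =
      {x : ℤ | (Int.gcd a r : ℤ) ∣ x ∧ ¬ r ∣ x} := by
  have dvd_mul_iff (k : ℤ) : r ∣ k * a ↔ r / Int.gcd a r ∣ k := by
    simpa [Int.modEq_zero_iff_dvd] using mul_modEq_mul_iff_modEq_ediv_gcd (a := a) hr.ne' k 0
  ext x
  constructor
  · rintro ⟨n, k, hk_pos, hk_le, rfl⟩
    refine ⟨exists_mul_modEq_iff_gcd_dvd.mp ⟨k, by simp [Int.ModEq]⟩, fun hx ↦ ?_⟩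
    have hk : r / Int.gcd a r ∣ k :=
      (dvd_mul_iff k).mp ((dvd_add_right (dvd_mul_left r n)).mp hx)
    have := Int.le_of_dvd (by omega) hk
    omega
  · rintro ⟨hg, hx⟩
    have hquot : 0 < r / Int.gcd a r :=
      Int.ediv_pos_of_pos_of_dvd hr (by positivity) (Int.gcd_dvd_right a r)
    obtain ⟨m, hm⟩ := exists_mul_modEq_iff_gcd_dvd.mpr hg
    obtain ⟨k, hk_nonneg, hk_lt, hkm⟩ := Int.existsUnique_equiv m hquot
    have hkx : k * a ≡ x [ZMOD r] :=
      ((mul_modEq_mul_iff_modEq_ediv_gcd hr.ne' k m).mpr hkm).trans hm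
    have hk_ne : k ≠ 0 := by
      rintro rfl
      exact hx (hkx.dvd_iff.mp (by simp))
    obtain ⟨n, hn⟩ := Int.modEq_iff_add_fac.mp hkx
    exact ⟨n, k, by omega, by omega, by linear_combination hn⟩

/-- For `r ≥ 1` odd, `d ≥ 1`, and `g = gcd(d, r)`,
`{ n·r + 2·k·d : n ∈ ℤ, 1 ≤ k ≤ r/g − 1 } = { x ∈ ℤ : g ∣ x and r ∤ x }`. -/
theorem atypicality_set_odd (r d : ℤ) (hr : 1 ≤ r) (hodd : Odd r) (hd : 1 ≤ d) :
    {x : ℤ | ∃ n k : ℤ, 1 ≤ k ∧ k ≤ r / (Int.gcd d r : ℤ) - 1 ∧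
        x = n * r + 2 * k * d} =
      {x : ℤ | (Int.gcd d r : ℤ) ∣ x ∧ ¬ r ∣ x} := by
  have hgcd : Int.gcd (2 * d) r = Int.gcd d r :=
    Int.gcd_mul_right_left_of_gcd_eq_one
      (Int.isCoprime_iff_gcd_eq_one.mp (Int.isCoprime_two_left.mpr hodd))
  simpa only [hgcd, mul_left_comm, mul_assoc] using atypicality_set_odd_general r (2 * d) hr
end

section
/- Let ℓ ≥ 3 be an odd integer, set r = ℓ, let d ≥ 1 be an integer, set g = gcd(d, r) and r_α = r/g. Then for every complex number z the following are equivalent: (i) for every integer k with 1 ≤ k ≤ r_α − 1, the number 2(z − k·d) is not an integer multiple of ℓ; (ii) z lies in (ℂ ∖ (g/2)ℤ) ∪ (r/2)ℤ, where (g/2)ℤ = { g·m/2 : m ∈ ℤ } and (r/2)ℤ = { r·m/2 : m ∈ ℤ } are regarded as subsets of ℂ. -/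
/-! If `z ∉ (g/2)ℤ`, then `z` is typical, because `g` divides both `r` and `d`. So let `z = w / 2`
with `w` an integer: atypicality says that the congruence `2 d k ≡ w (mod r)` has a solution
`1 ≤ k < r / g`. As `r / g` is odd, `gcd (2 d) r = g`; hence the congruence is solvable exactly when
`g ∣ w`, its solutions form one class modulo `r / g`, and that class is the excluded one `k ≡ 0`
exactly when `r ∣ w`. -/

section Congruence

theorem div_gcd_dvd_iff_dvd_mul {n : ℤ} (hn : n ≠ 0) (a k : ℤ) :
    n / Int.gcd a n ∣ k ↔ n ∣ k * a := by
  have hgcd : (Int.gcd a n : ℤ) ≠ 0 := by simp [hn]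
  rw [Int.ediv_dvd_iff_dvd_mul (Int.gcd_dvd_right a n) hgcd, Int.gcd_comm,
    Int.dvd_gcd_mul_iff_dvd_mul, mul_comm]

theorem exists_dvd_sub_mul_iff {a n w : ℤ} :
    (∃ k : ℤ, n ∣ w - k * a) ↔ (Int.gcd a n : ℤ) ∣ w := by
  constructor
  · rintro ⟨k, hk⟩
    exact (dvd_sub_left ((Int.gcd_dvd_left a n).mul_left k)).1 ((Int.gcd_dvd_right a n).trans hk)
  · rintro ⟨c, rfl⟩
    refine ⟨Int.gcdA a n * c, Int.gcdB a n * c, ?_⟩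
    rw [Int.gcd_eq_gcd_ab]
    ring

theorem exists_pos_lt_div_gcd_dvd_sub_mul_iff {n : ℤ} (hn : 0 < n) (a w : ℤ) :
    (∃ k : ℤ, 1 ≤ k ∧ k ≤ n / Int.gcd a n - 1 ∧ n ∣ w - k * a) ↔
      (Int.gcd a n : ℤ) ∣ w ∧ ¬ n ∣ w := by
  constructor
  · rintro ⟨k, hk_pos, hk_le, hk⟩
    refine ⟨exists_dvd_sub_mul_iff.1 ⟨k, hk⟩, fun hw ↦ ?_⟩
    have hdvd : n / Int.gcd a n ∣ k :=
      (div_gcd_dvd_iff_dvd_mul hn.ne' a k).2 ((dvd_sub_right hw).1 hk)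
    have hle := Int.le_of_dvd (by lia) hdvd
    lia
  · rintro ⟨hgw, hw⟩
    set s := n / Int.gcd a n
    have hs_pos : 0 < s :=
      Int.ediv_pos_of_pos_of_dvd hn (by positivity) (Int.gcd_dvd_right a n)
    obtain ⟨x, hx⟩ := exists_dvd_sub_mul_iff.2 hgw
    have hmod : n ∣ w - x % s * a := by
      have hsub : n ∣ (x - x % s) * a :=
        (div_gcd_dvd_iff_dvd_mul hn.ne' a _).1 Int.dvd_self_sub_emod
      simpa only [sub_mul, sub_add_sub_cancel] using dvd_add hx hsub
    have hmod_ne : x % s ≠ 0 := fun h ↦ hw (by simpa only [h, zero_mul, sub_zero] using hmod)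
    have hmod_nonneg := Int.emod_nonneg x hs_pos.ne'
    have hmod_lt := Int.emod_lt_of_pos x hs_pos
    exact ⟨x % s, by lia, by lia, hmod⟩

theorem gcd_mul_left_eq_of_isCoprime_div_gcd {a c n : ℤ} (h : IsCoprime c (n / Int.gcd a n)) :
    Int.gcd (c * a) n = Int.gcd a n := by
  refine Nat.dvd_antisymm (Int.dvd_gcd ?_ (Int.gcd_dvd_right _ _))
    (Int.gcd_dvd_gcd_mul_left_left a n c)
  have hn : n ∣ n / Int.gcd a n * a := by
    rw [← Int.mul_ediv_assoc' a (Int.gcd_dvd_right a n),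
      Int.mul_ediv_assoc n (Int.gcd_dvd_left a n)]
    exact dvd_mul_right _ _
  obtain ⟨u, v, huv⟩ := h
  have hbezout : u * (c * a) + v * (n / Int.gcd a n * a) = a := by linear_combination a * huv
  have hdvd := dvd_add ((Int.gcd_dvd_left (c * a) n).mul_left u)
    (((Int.gcd_dvd_right (c * a) n).trans hn).mul_left v)
  rwa [hbezout] at hdvd

theorem odd_ediv_of_dvd {m n : ℤ} (hn : Odd n) (hmn : m ∣ n) : Odd (n / m) := by
  rw [← Int.ediv_mul_cancel hmn] at hn
  exact (Int.odd_mul.1 hn).1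

end Congruence

section Typical

variable {K : Type*} [Field K]

variable (K) in
/-- The set `(a/2)ℤ` of integer multiples of `a/2` in `K`. -/
def halfMultiples (a : ℤ) : Set K :=
  {x | ∃ m : ℤ, x = (a : K) * (m : K) / 2}

/-- Typicality of the scalar `z = λ_α` at a positive root `α` with `d_α = d`, in the case `ℓ = r`.
The number `r_α = r / g_α` is written out as `r / Int.gcd d r`. -/
def IsTypical (r d : ℤ) (z : K) : Prop :=
  ∀ k : ℤ, 1 ≤ k → k ≤ r / Int.gcd d r - 1 →
    ¬ ∃ m : ℤ, 2 * (z - (k : K) * (d : K)) = (r : K) * (m : K)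

theorem halfMultiples_subset_of_dvd {a b : ℤ} (h : a ∣ b) :
    halfMultiples K b ⊆ halfMultiples K a := by
  obtain ⟨c, rfl⟩ := h
  rintro _ ⟨m, rfl⟩
  exact ⟨c * m, by push_cast; ring⟩

variable [CharZero K]

theorem intCast_div_two_mem_halfMultiples_iff {a w : ℤ} :
    (w : K) / 2 ∈ halfMultiples K a ↔ a ∣ w := by
  refine exists_congr fun m ↦ ?_
  rw [div_left_inj' two_ne_zero]
  norm_cast

theorem isTypical_iff_forall_sub_notMem {r d : ℤ} {z : K} :
    IsTypical r d z ↔ ∀ k : ℤ, 1 ≤ k → k ≤ r / Int.gcd d r - 1 →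
      z - (k : K) * (d : K) ∉ halfMultiples K r := by
  simp only [IsTypical, halfMultiples, Set.mem_ofPred_eq, eq_div_iff (two_ne_zero' K), mul_comm]

theorem isTypical_of_notMem_halfMultiples {r d : ℤ} {z : K}
    (hz : z ∉ halfMultiples K (Int.gcd d r)) : IsTypical r d z := by
  rw [isTypical_iff_forall_sub_notMem]
  rintro k - - hk
  obtain ⟨m, hm⟩ := halfMultiples_subset_of_dvd (Int.gcd_dvd_right d r) hk
  obtain ⟨e, he⟩ := Int.gcd_dvd_left d r
  refine hz ⟨m + 2 * k * e, ?_⟩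
  have heK : (d : K) = (Int.gcd d r : ℤ) * e := by exact_mod_cast he
  push_cast at hm heK ⊢
  linear_combination hm + (k : K) * heK

theorem isTypical_intCast_div_two_iff {r d : ℤ} (hr : 0 < r) (hodd : Odd (r / Int.gcd d r))
    (w : ℤ) : IsTypical r d ((w : K) / 2) ↔ ((Int.gcd d r : ℤ) ∣ w → r ∣ w) := by
  have hgcd : Int.gcd (2 * d) r = Int.gcd d r :=
    gcd_mul_left_eq_of_isCoprime_div_gcd (Int.isCoprime_two_left.2 hodd)
  have hshift (k : ℤ) : (w : K) / 2 - k * d = ((w - k * (2 * d) : ℤ) : K) / 2 := by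
    push_cast
    ring
  have hatypical := exists_pos_lt_div_gcd_dvd_sub_mul_iff hr (2 * d) w
  rw [hgcd] at hatypical
  simp only [isTypical_iff_forall_sub_notMem, hshift, intCast_div_two_mem_halfMultiples_iff]
  simpa only [not_exists, not_and, not_not] using not_congr hatypical

theorem typicality_odd_general {r d : ℤ} (hr : 0 < r) (hodd : Odd (r / Int.gcd d r)) (z : K) :
    IsTypical r d z ↔
      z ∈ (Set.univ \ halfMultiples K (Int.gcd d r)) ∪ halfMultiples K r := by
  by_cases hz : z ∈ halfMultiples K (Int.gcd d r)
  · obtain ⟨w, rfl⟩ : ∃ w : ℤ, z = (w : K) / 2 := by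
      obtain ⟨m, rfl⟩ := hz
      exact ⟨Int.gcd d r * m, by push_cast; rfl⟩
    have hgw := intCast_div_two_mem_halfMultiples_iff.1 hz
    simp only [isTypical_intCast_div_two_iff hr hodd, hgw, forall_const, Set.mem_union,
      Set.mem_sdiff, hz, not_true_eq_false, and_false, false_or,
      intCast_div_two_mem_halfMultiples_iff]
  · exact iff_of_true (isTypical_of_notMem_halfMultiples hz) (Or.inl ⟨trivial, hz⟩)

end Typical

/-- typicality criterion, odd case: for `ℓ ≥ 3` odd, `r = ℓ`,
`d ≥ 1`, `g = gcd(d, r)`, `r_α = r/g`, and any `z ∈ ℂ`: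
`2(z − k·d)` is not an integer multiple of `ℓ` for all `1 ≤ k ≤ r_α − 1`
iff `z ∈ (ℂ ∖ (g/2)ℤ) ∪ (r/2)ℤ`. -/
theorem typicality_odd (ℓ : ℤ) (hℓ : 3 ≤ ℓ) (hodd : Odd ℓ)
    (r : ℤ) (hr : r = ℓ) (d : ℤ) (hd : 1 ≤ d)
    (g : ℤ) (hg : g = Int.gcd d r) (rα : ℤ) (hrα : rα = r / g) (z : ℂ) :
    (∀ k : ℤ, 1 ≤ k → k ≤ rα - 1 →
        ¬ ∃ m : ℤ, 2 * (z - (k : ℂ) * (d : ℂ)) = (ℓ : ℂ) * (m : ℂ)) ↔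
      z ∈ (Set.univ \ {x : ℂ | ∃ m : ℤ, x = (g : ℂ) * (m : ℂ) / 2}) ∪
            {x : ℂ | ∃ m : ℤ, x = (r : ℂ) * (m : ℂ) / 2} := by
  subst hr hg hrα
  exact typicality_odd_general (by lia) (odd_ediv_of_dvd hodd (Int.gcd_dvd_right d r)) z
end
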